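/- For every M₀ ≥ 2 and μ > 0 there exist ε₀ > 0 and λ > 0, depending only on μ and M₀, such that the following holds. Let s ∈ [1/4, 1/2], let M be a constant with |M| ≤ M₀, let 0 < ε₁ ≤ 10^{3/2}, and let θ : ℝ × [−2/M₀, 0] → ℝ be bounded and continuous, continuously differentiable in t and twice continuously differentiable in x on [−5,5] × [−2/M₀, 0], with θ ≤ 1 on all of ℝ × [−2/M₀, 0]. Assume θ satisfies the subsolution inequality ∂_t θ + M θ ∂_x θ + (−Δ)^s θ − ε₁ ∂_{xx} θ ≤ ε₀ at every point of [−5,5] × [−2/M₀, 0], and that the Lebesgue measure of the set {(x,t) ∈ [−1,1] × [−2/M₀, −1/M₀] : θ(x,t) ≤ 0} is at least μ. Then θ ≤ 1 − λ on [−1,1] × [−1/M₀, 0]. -/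

import Mathlib

open MeasureTheory Real Set Filter

/-- The normalizing constant of the 1-D fractional Laplacian. -/
noncomputable def fracC (s : ℝ) : ℝ :=
  (4 : ℝ) ^ s * Real.Gamma (1 / 2 + s) / (Real.sqrt Real.pi * |Real.Gamma (-s)|)

/-- The fractional Laplacian `(-Δ)^s u (x)`. -/
noncomputable def fracLap (s : ℝ) (u : ℝ → ℝ) (x : ℝ) : ℝ :=
  fracC s * ∫ y : ℝ, (u x - u y) / |x - y| ^ (1 + 2 * s)

/-- A classical solution of the regularized fractional Burgers equation
`θ_t + θ θ_x + (-Δ)^s θ - ε₁ θ_xx = 0` on a set `D ⊆ ℝ × ℝ` (points written `(x, t)`):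
a bounded continuous function, continuously differentiable in `t` and twice continuously
differentiable in `x`, satisfying the equation at every point of `D`, where the fractional
Laplacian (acting in `x`) is given by an absolutely convergent integral. -/
structure IsClassicalSolution (s ε₁ : ℝ) (θ : ℝ → ℝ → ℝ) (D : Set (ℝ × ℝ)) : Prop where
  bounded : ∃ B : ℝ, ∀ p ∈ D, |θ p.1 p.2| ≤ B
  cont : ContinuousOn (fun p : ℝ × ℝ => θ p.1 p.2) D
  diff_t : ∀ p ∈ D, DifferentiableAt ℝ (fun t => θ p.1 t) p.2
  cont_dt : ContinuousOn (fun p : ℝ × ℝ => deriv (fun t => θ p.1 t) p.2) D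
  diff_x : ∀ p ∈ D, DifferentiableAt ℝ (fun x => θ x p.2) p.1
  diff_xx : ∀ p ∈ D, DifferentiableAt ℝ (deriv fun x => θ x p.2) p.1
  cont_dx : ContinuousOn (fun p : ℝ × ℝ => deriv (fun x => θ x p.2) p.1) D
  cont_dxx : ContinuousOn (fun p : ℝ × ℝ => deriv (deriv fun x => θ x p.2) p.1) D
  integrable : ∀ p ∈ D,
    Integrable fun y : ℝ => (θ p.1 p.2 - θ y p.2) / |p.1 - y| ^ (1 + 2 * s)
  eqn : ∀ p ∈ D,
    deriv (fun t => θ p.1 t) p.2 + θ p.1 p.2 * deriv (fun x => θ x p.2) p.1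
      + fracLap s (fun x => θ x p.2) p.1
      - ε₁ * deriv (deriv fun x => θ x p.2) p.1 = 0

/-!
Compare `1 - θ` with a barrier `m(t) b(x, t)`, where `b` is a positive cosine half-wave whose
support shrinks from `[-5, 5]` to `[-2, 2]` faster than the drift can move it. As the cosine is an
eigenfunction of `∂_xx` and of the averages `(u(· + h) + u(· - h)) / 2`, the diffusion, the drift
and the nonlocal cost of the barrier are all at most a constant multiple of `m b`. If `θ + m b`
touches a level above `1` from below, the nonlocal operator sees the set `{θ ≤ 0}` and gains a
multiple of its measure at time `t`. Hence `m` may solve the linear equation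
`m' = γ |{θ(·, t) ≤ 0} ∩ [-1, 1]| - K m`, up to smoothing the indicator of `{θ ≤ 0}`, and the
measure hypothesis makes `m` bounded below on `[-1/M₀, 0]`.

The fractional Laplacian of the barrier need not converge absolutely when `2 s ≥ 1`, since `b` is
only Lipschitz, so its cost is estimated after symmetrizing the difference quotients of `θ` about
the touching point.
-/

theorem neg_ne_neg_natCast {s : ℝ} (hs : s ∈ Ioo (0 : ℝ) 1) (n : ℕ) : -s ≠ -(n : ℝ) := by
  rw [Ne, neg_inj]
  rintro rfl
  have h0 : 0 < n := by exact_mod_cast hs.1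
  have h1 : n < 1 := by exact_mod_cast hs.2
  omega

theorem fracC_pos {s : ℝ} (hs : s ∈ Ioo (0 : ℝ) 1) : 0 < fracC s := by
  have hΓ : 0 < Gamma (1 / 2 + s) := Gamma_pos_of_pos (by linarith [hs.1])
  have hΓneg : Gamma (-s) ≠ 0 := Gamma_ne_zero (neg_ne_neg_natCast hs)
  unfold fracC
  positivity

theorem continuousOn_fracC : ContinuousOn fracC (Ioo 0 1) := by
  intro s hs
  have hnum : ContinuousAt (fun r : ℝ => Gamma (1 / 2 + r)) s := by
    refine ContinuousAt.comp (g := Gamma) (f := (1 / 2 + ·)) ?_ (by fun_prop)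
    refine (differentiableAt_Gamma fun n hn => ?_).continuousAt
    linarith [hs.1, (n.cast_nonneg : (0 : ℝ) ≤ n)]
  have hden : ContinuousAt (fun r : ℝ => |Gamma (-r)|) s :=
    (ContinuousAt.comp (g := Gamma) (f := Neg.neg)
      (differentiableAt_Gamma (neg_ne_neg_natCast hs)).continuousAt (by fun_prop)).abs
  have hpow : ContinuousAt (fun r : ℝ => (4 : ℝ) ^ r) s :=
    (continuous_const_rpow (by norm_num)).continuousAt
  refine ((hpow.mul hnum).div (continuousAt_const.mul hden) ?_).continuousWithinAt
  exact mul_ne_zero (sqrt_ne_zero'.mpr pi_pos)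
    (abs_ne_zero.mpr (Gamma_ne_zero (neg_ne_neg_natCast hs)))

/-- The density of the one-dimensional `2s`-stable Lévy measure, weighted by
`min 1 (h ^ 2)`, which makes it integrable. -/
noncomputable def levyKernel (s h : ℝ) : ℝ := min 1 (h ^ 2) / |h| ^ (1 + 2 * s)

theorem levyKernel_nonneg (s h : ℝ) : 0 ≤ levyKernel s h := by
  unfold levyKernel; positivity

theorem integrable_levyKernel {s : ℝ} (hs : s ∈ Ioo (0 : ℝ) 1) : Integrable (levyKernel s) := by
  obtain ⟨hs0, hs1⟩ := hs
  have hnear : IntegrableOn (levyKernel s) (Ioc 0 1) := by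
    rw [integrableOn_Ioc_iff_integrableOn_Ioo]
    refine ((intervalIntegral.integrableOn_Ioo_rpow_iff one_pos).mpr
      (show -1 < 1 - 2 * s by linarith)).congr_fun (fun h hh => ?_) measurableSet_Ioo
    simp only [levyKernel]
    rw [min_eq_right (pow_le_one₀ hh.1.le hh.2.le), abs_of_pos hh.1, ← rpow_natCast,
      ← rpow_sub hh.1]
    congr 1
    push_cast
    ring
  have hfar : IntegrableOn (levyKernel s) (Ioi 1) := by
    refine (integrableOn_Ioi_rpow_of_lt (show -(1 + 2 * s) < -1 by linarith) one_pos).congr_fun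
      (fun h hh => ?_) measurableSet_Ioi
    have hpos : 0 < h := one_pos.trans hh
    simp only [levyKernel]
    rw [min_eq_left (one_le_pow₀ (le_of_lt hh)), abs_of_pos hpos, rpow_neg hpos.le, one_div]
  have heven : levyKernel s = fun h => levyKernel s ‖h‖ := by
    ext h
    simp only [levyKernel, norm_eq_abs, sq_abs, abs_abs]
  rw [heven, integrable_fun_norm_addHaar volume (f := levyKernel s)]
  simpa using Ioc_union_Ioi_eq_Ioi (zero_le_one' ℝ) ▸ hnear.union hfar

theorem levyKernel_le_add {s₀ s₁ s : ℝ} (hs : s ∈ Icc s₀ s₁) (h : ℝ) :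
    levyKernel s h ≤ levyKernel s₀ h + levyKernel s₁ h := by
  rcases eq_or_ne h 0 with rfl | hne
  · simp [levyKernel]
  have hpos : 0 < |h| := abs_pos.mpr hne
  have hmin : 0 ≤ min 1 (h ^ 2) := by positivity
  rcases le_total |h| 1 with hle | hge
  · refine le_add_of_nonneg_of_le (levyKernel_nonneg s₀ h)
      (div_le_div_of_nonneg_left hmin (by positivity) ?_)
    exact rpow_le_rpow_of_exponent_ge hpos hle (by linarith [hs.2])
  · refine le_add_of_le_of_nonneg
      (div_le_div_of_nonneg_left hmin (by positivity) ?_) (levyKernel_nonneg s₁ h)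
    exact rpow_le_rpow_of_exponent_le hge (by linarith [hs.1])

theorem exists_fracC_bounds {s₀ s₁ : ℝ} (hs₀ : 0 < s₀) (hs₁ : s₁ < 1) :
    ∃ c Λ : ℝ, 0 < c ∧ 0 ≤ Λ ∧
      ∀ s ∈ Icc s₀ s₁, c ≤ fracC s ∧ fracC s * ∫ h, levyKernel s h ≤ Λ := by
  have hsub : Icc s₀ s₁ ⊆ Ioo 0 1 := fun s hs => ⟨hs₀.trans_le hs.1, hs.2.trans_lt hs₁⟩
  have hcont := continuousOn_fracC.mono hsub
  obtain ⟨c, hc, hcle⟩ :=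
    isCompact_Icc.exists_forall_le' hcont fun s hs => fracC_pos (hsub hs)
  obtain ⟨C, hC⟩ := isCompact_Icc.exists_bound_of_continuousOn hcont
  set Λ := |C| * ∫ h, (levyKernel s₀ h + levyKernel s₁ h)
  have hint_nonneg (s : ℝ) : 0 ≤ ∫ h, levyKernel s h := integral_nonneg (levyKernel_nonneg s)
  refine ⟨c, Λ, hc, mul_nonneg (abs_nonneg C) (integral_nonneg fun h =>
    add_nonneg (levyKernel_nonneg s₀ h) (levyKernel_nonneg s₁ h)), fun s hs => ⟨hcle s hs, ?_⟩⟩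
  have hle : s₀ ≤ s₁ := hs.1.trans hs.2
  refine mul_le_mul ((le_abs_self _).trans ((hC s hs).trans (le_abs_self C))) ?_
    (hint_nonneg s) (abs_nonneg C)
  exact integral_mono (integrable_levyKernel (hsub hs))
    ((integrable_levyKernel (hsub (left_mem_Icc.mpr hle))).add
      (integrable_levyKernel (hsub (right_mem_Icc.mpr hle)))) (levyKernel_le_add hs)

theorem integral_add_comp_sub {f : ℝ → ℝ} (hf : Integrable f) (x : ℝ) :
    ∫ h, (f (x + h) + f (x - h)) = 2 * ∫ y, f y := by
  rw [integral_add (hf.comp_add_left x) (hf.comp_sub_left x), integral_add_left_eq_self,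
    integral_sub_left_eq_self, two_mul]

theorem integral_sub_mul_integral_levyKernel_le {s : ℝ} (hs : s ∈ Ioo (0 : ℝ) 1)
    {u w φ : ℝ → ℝ} {x k : ℝ}
    (hu : Integrable fun y => (u x - u y) / |x - y| ^ (1 + 2 * s)) (hφ : Integrable φ)
    (hφle : ∀ y, y ≠ x → φ y ≤ (u x + w x - (u y + w y)) / |x - y| ^ (1 + 2 * s))
    (hw : ∀ h, -(2 * k * min 1 (h ^ 2)) ≤ w (x + h) + w (x - h) - 2 * w x) :
    (∫ y, φ y) - k * ∫ h, levyKernel s h ≤ ∫ y, (u x - u y) / |x - y| ^ (1 + 2 * s) := by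
  set q := fun y => (u x - u y) / |x - y| ^ (1 + 2 * s) with hq
  have hpointwise : ∀ h : ℝ, h ≠ 0 →
      φ (x + h) + φ (x - h) - 2 * k * levyKernel s h ≤ q (x + h) + q (x - h) := by
    intro h hh
    have hright := hφle (x + h) (by simpa using hh)
    have hleft := hφle (x - h) (by simpa using hh)
    have hsecond : -(2 * k * levyKernel s h) ≤
        (w (x + h) + w (x - h) - 2 * w x) / |h| ^ (1 + 2 * s) := by
      rw [levyKernel, ← mul_div_assoc, ← neg_div]
      exact div_le_div_of_nonneg_right (hw h) (by positivity)
    simp only [hq, sub_add_cancel_left, sub_sub_cancel, abs_neg] at hright hleft ⊢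
    linear_combination hright + hleft + hsecond
  have hφ_sym := (hφ.comp_add_left x).add (hφ.comp_sub_left x)
  have hkernel := (integrable_levyKernel hs).const_mul (2 * k)
  have hle : 2 * (∫ y, φ y) - 2 * k * ∫ h, levyKernel s h ≤ 2 * ∫ y, q y :=
    calc 2 * (∫ y, φ y) - 2 * k * ∫ h, levyKernel s h
        = ∫ h, (φ (x + h) + φ (x - h) - 2 * k * levyKernel s h) := by
          rw [integral_sub (f := fun h => φ (x + h) + φ (x - h)) hφ_sym hkernel,
            integral_add_comp_sub hφ, integral_const_mul]
      _ ≤ ∫ h, (q (x + h) + q (x - h)) := by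
          refine integral_mono_ae (hφ_sym.sub hkernel)
            ((hu.comp_add_left x).add (hu.comp_sub_left x)) ?_
          filter_upwards [Measure.ae_ne volume 0] with h hh using hpointwise h hh
      _ = 2 * ∫ y, q y := integral_add_comp_sub hu x
  linarith

/-- A continuous version of the indicator of `(-∞, 0]`, vanishing on `[1/2, ∞)`. -/
def cutoff (v : ℝ) : ℝ := max 0 (min 1 (1 - 2 * v))

theorem continuous_cutoff : Continuous cutoff := by unfold cutoff; fun_prop

theorem cutoff_nonneg (v : ℝ) : 0 ≤ cutoff v := le_max_left _ _

theorem cutoff_le_one (v : ℝ) : cutoff v ≤ 1 := max_le zero_le_one (min_le_left _ _)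

theorem cutoff_of_nonpos {v : ℝ} (hv : v ≤ 0) : cutoff v = 1 := by
  rw [cutoff, min_eq_left (by linarith), max_eq_right zero_le_one]

theorem cutoff_div_four_le {v d : ℝ} (hd : 0 ≤ d) (hvd : 3 / 4 - v ≤ d) : cutoff v / 4 ≤ d := by
  rw [div_le_iff₀ four_pos, cutoff]
  refine max_le (by linarith) ?_
  rcases le_total v (1 / 2) with _ | _
  · exact (min_le_left _ _).trans (by linarith)
  · exact (min_le_right _ _).trans (by linarith)

theorem integrable_cutoff_comp {α : Type*} [MeasurableSpace α] {ν : Measure α}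
    [IsFiniteMeasure ν] {f : α → ℝ} (hf : AEMeasurable f ν) :
    Integrable (fun a => cutoff (f a)) ν :=
  .of_bound (continuous_cutoff.measurable.comp_aemeasurable hf).aestronglyMeasurable 1
    (ae_of_all _ fun a => by
      rw [norm_of_nonneg (cutoff_nonneg _)]
      exact cutoff_le_one _)

theorem measureReal_nonpos_le_integral_cutoff {α : Type*} [MeasurableSpace α] {ν : Measure α}
    [IsFiniteMeasure ν] {f : α → ℝ} (hf : AEMeasurable f ν) :
    ν.real {a | f a ≤ 0} ≤ ∫ a, cutoff (f a) ∂ν := by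
  have hnull : NullMeasurableSet {a | f a ≤ 0} ν := nullMeasurableSet_le hf aemeasurable_const
  calc ν.real {a | f a ≤ 0} = ∫ a in {a | f a ≤ 0}, cutoff (f a) ∂ν := by
        rw [setIntegral_congr_fun₀ hnull (g := fun _ => (1 : ℝ)) fun a ha => cutoff_of_nonpos ha]
        simp
    _ ≤ ∫ a, cutoff (f a) ∂ν :=
        setIntegral_le_integral (integrable_cutoff_comp hf) (ae_of_all _ fun a => cutoff_nonneg _)

/-- A smoothed measure of `{y ∈ [-1, 1] | u y ≤ 0}`. -/
noncomputable def nonposMass (u : ℝ → ℝ) : ℝ := ∫ y in Icc (-1 : ℝ) 1, cutoff (u y)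

theorem nonposMass_nonneg (u : ℝ → ℝ) : 0 ≤ nonposMass u :=
  integral_nonneg fun _ => cutoff_nonneg _

theorem nonposMass_le_two {u : ℝ → ℝ} (hu : Continuous u) : nonposMass u ≤ 2 :=
  calc nonposMass u ≤ ∫ _ in Icc (-1 : ℝ) 1, (1 : ℝ) :=
        integral_mono (integrable_cutoff_comp hu.aemeasurable) (integrable_const 1)
          fun _ => cutoff_le_one _
    _ = 2 := by norm_num

theorem continuousOn_nonposMass {θ : ℝ → ℝ → ℝ} {J : Set ℝ}
    (hθ : ContinuousOn (fun p : ℝ × ℝ => θ p.1 p.2) (univ ×ˢ J)) :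
    ContinuousOn (fun t => nonposMass fun y => θ y t) J := by
  have hx (t : ℝ) (ht : t ∈ J) : Continuous fun y => θ y t :=
    hθ.comp_continuous (f := fun y => (y, t)) (by fun_prop) fun y => ⟨mem_univ y, ht⟩
  refine continuousOn_of_dominated (bound := fun _ => 1)
    (fun t ht => (continuous_cutoff.comp (hx t ht)).aestronglyMeasurable)
    (fun t _ => ae_of_all _ fun y => ?_) (integrable_const 1) (ae_of_all _ fun y => ?_)
  · rw [norm_of_nonneg (cutoff_nonneg _)]
    exact cutoff_le_one _
  · exact continuous_cutoff.comp_continuousOn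
      (hθ.comp (f := fun t => (y, t)) (by fun_prop) fun t ht => ⟨mem_univ y, ht⟩)

theorem volume_nonpos_le_integral_nonposMass {θ : ℝ → ℝ → ℝ} {a b : ℝ} (hab : a ≤ b)
    (hθ : ContinuousOn (fun p : ℝ × ℝ => θ p.1 p.2) (Icc (-1) 1 ×ˢ Icc a b)) :
    volume.real {p : ℝ × ℝ | p ∈ Icc (-1 : ℝ) 1 ×ˢ Icc a b ∧ θ p.1 p.2 ≤ 0} ≤
      ∫ t in a..b, nonposMass fun y => θ y t := by
  have hmeasQ : MeasurableSet (Icc (-1 : ℝ) 1 ×ˢ Icc a b) :=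
    measurableSet_Icc.prod measurableSet_Icc
  have hmeas : AEMeasurable (fun p : ℝ × ℝ => θ p.1 p.2)
      ((volume.restrict (Icc (-1) 1)).prod (volume.restrict (Icc a b))) := by
    rw [Measure.prod_restrict, ← Measure.volume_eq_prod]
    exact hθ.aemeasurable hmeasQ
  calc volume.real {p : ℝ × ℝ | p ∈ Icc (-1 : ℝ) 1 ×ˢ Icc a b ∧ θ p.1 p.2 ≤ 0}
      = ((volume.restrict (Icc (-1) 1)).prod (volume.restrict (Icc a b))).real
          {p : ℝ × ℝ | θ p.1 p.2 ≤ 0} := by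
        rw [Measure.prod_restrict, ← Measure.volume_eq_prod, measureReal_restrict_apply' hmeasQ,
          inter_comm]
        rfl
    _ ≤ ∫ p, cutoff (θ p.1 p.2) ∂(volume.restrict (Icc (-1) 1)).prod (volume.restrict (Icc a b)) :=
        measureReal_nonpos_le_integral_cutoff hmeas
    _ = ∫ t in Icc a b, nonposMass fun y => θ y t :=
        integral_prod_symm _ (integrable_cutoff_comp hmeas)
    _ = ∫ t in a..b, nonposMass fun y => θ y t := by
        rw [intervalIntegral.integral_of_le hab, integral_Icc_eq_integral_Ioc]

-- The constant is `4 * 6 ^ 3`: on `[-1, 1]` the gap `u x + w x - (u y + w y)` is at least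
-- `cutoff (u y) / 4`, and `|x - y| ≤ 6`.
theorem le_fracLap_of_touching {s : ℝ} (hs : s ∈ Ioo (0 : ℝ) 1) {u w : ℝ → ℝ} {x k : ℝ}
    (hu : Continuous u) (hquot : Integrable fun y => (u x - u y) / |x - y| ^ (1 + 2 * s))
    (hx : |x| ≤ 5) (hmax : ∀ y, u y + w y ≤ u x + w x) (hone : 1 ≤ u x + w x)
    (hw_le : ∀ y, w y ≤ 1 / 4)
    (hw : ∀ h, -(2 * k * min 1 (h ^ 2)) ≤ w (x + h) + w (x - h) - 2 * w x) :
    fracC s * (nonposMass u / 864 - k * ∫ h, levyKernel s h) ≤ fracLap s u x := by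
  set φ : ℝ → ℝ := (Icc (-1 : ℝ) 1).indicator fun y => cutoff (u y) / 864
  have hφ : Integrable φ := (integrable_indicator_iff measurableSet_Icc).mpr
    ((integrable_cutoff_comp hu.aemeasurable).div_const 864)
  have hφ_integral : ∫ y, φ y = nonposMass u / 864 := by
    rw [integral_indicator measurableSet_Icc, integral_div, nonposMass]
  have hφ_le (y : ℝ) (hy : y ≠ x) :
      φ y ≤ (u x + w x - (u y + w y)) / |x - y| ^ (1 + 2 * s) := by
    have hdist : 0 < |x - y| := abs_pos.mpr (sub_ne_zero.mpr hy.symm)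
    have hgap : 0 ≤ u x + w x - (u y + w y) := sub_nonneg.mpr (hmax y)
    by_cases hyI : y ∈ Icc (-1 : ℝ) 1
    · have hdist_le : |x - y| ≤ 6 := by linarith [abs_sub x y, abs_le.mpr hyI]
      have hpow : |x - y| ^ (1 + 2 * s) ≤ 216 :=
        calc |x - y| ^ (1 + 2 * s) ≤ 6 ^ (1 + 2 * s) :=
              rpow_le_rpow hdist.le hdist_le (by linarith [hs.1])
          _ ≤ 6 ^ (3 : ℝ) := rpow_le_rpow_of_exponent_le (by norm_num) (by linarith [hs.2])
          _ = 216 := by norm_num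
      rw [show φ y = cutoff (u y) / 864 from indicator_of_mem hyI _, le_div_iff₀ (by positivity)]
      calc cutoff (u y) / 864 * |x - y| ^ (1 + 2 * s) ≤ cutoff (u y) / 864 * 216 :=
            mul_le_mul_of_nonneg_left hpow (div_nonneg (cutoff_nonneg _) (by norm_num))
        _ = cutoff (u y) / 4 := by ring
        _ ≤ u x + w x - (u y + w y) := cutoff_div_four_le hgap (by linarith [hw_le y])
    · rw [show φ y = 0 from indicator_of_notMem hyI _]
      positivity
  have hmain := integral_sub_mul_integral_levyKernel_le hs hquot hφ hφ_le hw
  rw [hφ_integral] at hmain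
  exact mul_le_mul_of_nonneg_left hmain (fracC_pos hs).le

/-- The half-wave `cos (π z / 2)` on `[-1, 1]`, extended by zero. It is chosen because on its
support it is an eigenfunction of `d² / dz²`. -/
noncomputable def cosBump (z : ℝ) : ℝ := cos (π / 2 * min 1 |z|)

theorem continuous_cosBump : Continuous cosBump := by unfold cosBump; fun_prop

theorem cosBump_nonneg (z : ℝ) : 0 ≤ cosBump z := by
  have hle : min 1 |z| ≤ 1 := min_le_left _ _
  have hnonneg : 0 ≤ min 1 |z| := by positivity
  exact cos_nonneg_of_mem_Icc ⟨by nlinarith [pi_pos], by nlinarith [pi_pos]⟩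

theorem cosBump_le_one (z : ℝ) : cosBump z ≤ 1 := cos_le_one _

theorem cosBump_of_one_le_abs {z : ℝ} (hz : 1 ≤ |z|) : cosBump z = 0 := by
  rw [cosBump, min_eq_left hz, mul_one, cos_pi_div_two]

theorem cosBump_of_abs_le_one {z : ℝ} (hz : |z| ≤ 1) : cosBump z = cos (π / 2 * z) := by
  rw [cosBump, min_eq_right hz, ← cos_abs (π / 2 * z), abs_mul, abs_of_pos pi_div_two_pos]

theorem cos_le_cosBump {z : ℝ} (hz : |z| ≤ 3) : cos (π / 2 * z) ≤ cosBump z := by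
  rcases le_total |z| 1 with hle | hge
  · exact (cosBump_of_abs_le_one hle).ge
  · rw [cosBump_of_one_le_abs hge, ← cos_abs, abs_mul, abs_of_pos pi_div_two_pos]
    exact cos_nonpos_of_pi_div_two_le_of_le (by nlinarith [pi_pos]) (by nlinarith [pi_pos])

theorem half_le_cosBump {z : ℝ} (hz : |z| ≤ 2 / 3) : 1 / 2 ≤ cosBump z := by
  rw [cosBump, min_eq_right (by linarith), ← cos_pi_div_three]
  exact cos_le_cos_of_nonneg_of_le_pi (by positivity) (by linarith [pi_pos])
    (by nlinarith [pi_pos])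

theorem cosBump_second_difference {z : ℝ} (hz : |z| ≤ 1) (η : ℝ) :
    -(2 * cosBump z * min 1 ((2 * η) ^ 2)) ≤
      cosBump (z + η) + cosBump (z - η) - 2 * cosBump z := by
  have hz_nonneg := cosBump_nonneg z
  rcases le_total 1 ((2 * η) ^ 2) with hbig | hsmall
  · rw [min_eq_left hbig]
    linarith [cosBump_nonneg (z + η), cosBump_nonneg (z - η)]
  rw [min_eq_right hsmall]
  have hη : |η| ≤ 1 := by
    rw [← sq_le_one_iff_abs_le_one]
    nlinarith [sq_nonneg η]
  have hsum : 2 * cosBump z * cos (π / 2 * η) ≤ cosBump (z + η) + cosBump (z - η) :=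
    calc 2 * cosBump z * cos (π / 2 * η) = cos (π / 2 * (z + η)) + cos (π / 2 * (z - η)) := by
          rw [cosBump_of_abs_le_one hz, mul_add, mul_sub, cos_add, cos_sub]
          ring
      _ ≤ cosBump (z + η) + cosBump (z - η) :=
          add_le_add (cos_le_cosBump (by linarith [abs_add_le z η]))
            (cos_le_cosBump (by linarith [abs_sub z η]))
  have hcos : 1 - (2 * η) ^ 2 ≤ cos (π / 2 * η) :=
    calc 1 - (2 * η) ^ 2 ≤ 1 - (π / 2 * η) ^ 2 / 2 := by
          have hpi : (π / 2) ^ 2 ≤ 2 ^ 2 :=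
            pow_le_pow_left₀ pi_div_two_pos.le (by linarith [pi_le_four]) 2
          rw [mul_pow, mul_pow]
          nlinarith [mul_le_mul_of_nonneg_right hpi (sq_nonneg η), sq_nonneg η]
      _ ≤ cos (π / 2 * η) := one_sub_sq_div_two_le_cos
  nlinarith [mul_le_mul_of_nonneg_left hcos hz_nonneg]

theorem hasDerivAt_cosBump {z : ℝ} (hz : |z| < 1) :
    HasDerivAt cosBump (-(π / 2 * sin (π / 2 * z))) z := by
  have hcos : HasDerivAt (fun y => cos (π / 2 * y)) (-(π / 2 * sin (π / 2 * z))) z :=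
    (((hasDerivAt_id z).const_mul (π / 2)).cos).congr_deriv (by simp; ring)
  refine hcos.congr_of_eventuallyEq ?_
  filter_upwards [continuous_abs.continuousAt.eventually_lt continuousAt_const hz] with y hy
    using cosBump_of_abs_le_one hy.le

theorem hasDerivAt_const_mul_cosBump_div {m ρ x : ℝ} (hx : |x / ρ| < 1) :
    HasDerivAt (fun y => m * cosBump (y / ρ)) (-(m * (π / 2 * sin (π / 2 * (x / ρ)) / ρ))) x :=
  ((HasDerivAt.comp (h₂ := cosBump) (h := fun y => y / ρ) x (hasDerivAt_cosBump hx)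
    ((hasDerivAt_id x).div_const ρ)).const_mul m).congr_deriv (by ring)

theorem hasDerivAt_deriv_const_mul_cosBump_div {m ρ x : ℝ} (hx : |x / ρ| < 1) :
    HasDerivAt (fun y => -(m * (π / 2 * sin (π / 2 * (y / ρ)) / ρ)))
      (-((π / 2 / ρ) ^ 2 * (m * cosBump (x / ρ)))) x := by
  rw [cosBump_of_abs_le_one hx.le]
  have hlin : HasDerivAt (fun y => π / 2 * (y / ρ)) (π / 2 * (1 / ρ)) x :=
    ((hasDerivAt_id x).div_const ρ).const_mul (π / 2)
  exact (((hlin.sin.const_mul (π / 2)).div_const ρ).const_mul m).neg.congr_deriv (by ring)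

theorem deriv_deriv_nonpos_of_isLocalMax {f : ℝ → ℝ} {x : ℝ} (hmax : IsLocalMax f x)
    (hf : ContinuousAt f x) : deriv (deriv f) x ≤ 0 := by
  by_contra! hpos
  have hmin := isLocalMin_of_deriv_deriv_pos hpos hmax.deriv_eq_zero hf
  have hconst : f =ᶠ[nhds x] fun _ => f x := by
    filter_upwards [hmax, hmin] with y hle hge using le_antisymm hle hge
  have hzero : deriv (deriv f) x = 0 := by simpa using hconst.deriv.deriv_eq
  exact hpos.ne' hzero

theorem derivs_of_isLocalMax_add {u w w' : ℝ → ℝ} {w'' x : ℝ}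
    (hmax : IsLocalMax (fun y => u y + w y) x) (hu : ∀ᶠ y in nhds x, DifferentiableAt ℝ u y)
    (hu' : DifferentiableAt ℝ (deriv u) x) (hw : ∀ᶠ y in nhds x, HasDerivAt w (w' y) y)
    (hw' : HasDerivAt w' w'' x) : deriv u x = -w' x ∧ deriv (deriv u) x ≤ -w'' := by
  have hsum : ∀ᶠ y in nhds x, HasDerivAt (fun y => u y + w y) (deriv u y + w' y) y := by
    filter_upwards [hu, hw] with y huy hwy using huy.hasDerivAt.add hwy
  have hderiv : deriv (fun y => u y + w y) =ᶠ[nhds x] fun y => deriv u y + w' y :=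
    hsum.mono fun y hy => hy.deriv
  have hfirst := hmax.hasDerivAt_eq_zero hsum.self_of_nhds
  have hsecond := deriv_deriv_nonpos_of_isLocalMax hmax hsum.self_of_nhds.continuousAt
  rw [hderiv.deriv_eq, (hu'.hasDerivAt.fun_add hw').deriv] at hsecond
  exact ⟨by linarith, by linarith⟩

theorem hasDerivAt_nonneg_of_forall_Icc_le {f : ℝ → ℝ} {f' a t : ℝ} (hat : a < t)
    (hf : HasDerivAt f f' t) (hmax : ∀ τ ∈ Icc a t, f τ ≤ f t) : 0 ≤ f' := by
  have hslope := (hasDerivWithinAt_iff_tendsto_slope' (by simp)).mp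
    (hf.hasDerivWithinAt (s := Iio t))
  refine ge_of_tendsto hslope ?_
  filter_upwards [Ioo_mem_nhdsLT hat] with τ hτ
  rw [slope_def_field]
  exact div_nonneg_of_nonpos (by linarith [hmax τ ⟨hτ.1.le, hτ.2.le⟩]) (by linarith [hτ.2])

theorem neg_sin_mul_add_le_cosBump {N v z : ℝ} (hv : |v| ≤ N) (hz : |z| ≤ 1) :
    -(sin (π / 2 * z) * (3 / 2 * N * z + v)) ≤ 2 * N * cosBump z := by
  wlog hz0 : 0 ≤ z generalizing v z
  · have hneg := this (v := -v) (z := -z) (by rwa [abs_neg]) (by rwa [abs_neg]) (by linarith)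
    rw [mul_neg, sin_neg, cosBump, abs_neg, ← cosBump] at hneg
    linarith
  rw [abs_of_nonneg hz0] at hz
  have hN : 0 ≤ N := (abs_nonneg v).trans hv
  have hsin0 : 0 ≤ sin (π / 2 * z) :=
    sin_nonneg_of_nonneg_of_le_pi (by positivity) (by nlinarith [pi_pos])
  have hvN : -N ≤ v := neg_le_of_abs_le hv
  rcases le_total z (2 / 3) with hinner | houter
  · have hbump : 1 / 2 ≤ cosBump z := half_le_cosBump (by rwa [abs_of_nonneg hz0])
    calc -(sin (π / 2 * z) * (3 / 2 * N * z + v)) ≤ sin (π / 2 * z) * N := by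
          nlinarith [mul_nonneg hN hz0]
      _ ≤ N := mul_le_of_le_one_left hN (sin_le_one _)
      _ ≤ 2 * N * cosBump z := by nlinarith
  · calc -(sin (π / 2 * z) * (3 / 2 * N * z + v)) ≤ 0 :=
          neg_nonpos.mpr (mul_nonneg hsin0 (by nlinarith))
      _ ≤ 2 * N * cosBump z := mul_nonneg (by positivity) (cosBump_nonneg z)

/-- The solution of `m' = f - K m`, `m T = 0`, by Duhamel's formula. -/
noncomputable def duhamel (K : ℝ) (f : ℝ → ℝ) (T t : ℝ) : ℝ :=
  exp (-(K * t)) * ∫ τ in T..t, exp (K * τ) * f τ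

section Duhamel

variable {K T t : ℝ} {f : ℝ → ℝ}

theorem duhamel_self : duhamel K f T T = 0 := by simp [duhamel]

theorem hasDerivAt_duhamel (hf : Continuous f) :
    HasDerivAt (duhamel K f T) (f t - K * duhamel K f T t) t := by
  have hexp : HasDerivAt (fun t => exp (-(K * t))) (exp (-(K * t)) * -K) t := by
    simpa using ((hasDerivAt_id t).const_mul K).fun_neg.exp
  have hint : HasDerivAt (fun t => ∫ τ in T..t, exp (K * τ) * f τ) (exp (K * t) * f t) t :=
    (show Continuous fun τ => exp (K * τ) * f τ by fun_prop).integral_hasStrictDerivAt T t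
      |>.hasDerivAt
  refine (hexp.mul hint).congr_deriv ?_
  have hinv : exp (-(K * t)) * exp (K * t) = 1 := by rw [← exp_add, neg_add_cancel, exp_zero]
  rw [duhamel]
  linear_combination f t * hinv

theorem duhamel_nonneg (hf : ∀ τ, 0 ≤ f τ) (hTt : T ≤ t) : 0 ≤ duhamel K f T t :=
  mul_nonneg (exp_pos _).le
    (intervalIntegral.integral_nonneg hTt fun τ _ => mul_nonneg (exp_pos _).le (hf τ))

theorem duhamel_le {B : ℝ} (hK : 0 ≤ K) (hB : 0 ≤ B) (hf : Continuous f) (hfB : ∀ τ, f τ ≤ B)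
    (hTt : T ≤ t) : duhamel K f T t ≤ B * (t - T) := by
  have hle : ∫ τ in T..t, exp (K * τ) * f τ ≤ ∫ _ in T..t, exp (K * t) * B := by
    refine intervalIntegral.integral_mono_on hTt
      (Continuous.intervalIntegrable (by fun_prop) _ _) (by simp) fun τ hτ => ?_
    have hexp : exp (K * τ) ≤ exp (K * t) := by gcongr; exact hτ.2
    exact (mul_le_mul_of_nonneg_left (hfB τ) (exp_pos _).le).trans
      (mul_le_mul_of_nonneg_right hexp hB)
  calc duhamel K f T t ≤ exp (-(K * t)) * ∫ _ in T..t, exp (K * t) * B :=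
        mul_le_mul_of_nonneg_left hle (exp_pos _).le
    _ = exp (-(K * t) + K * t) * (B * (t - T)) := by
        rw [intervalIntegral.integral_const, smul_eq_mul, exp_add]
        ring
    _ = B * (t - T) := by rw [neg_add_cancel, exp_zero, one_mul]

theorem exp_mul_integral_le_duhamel {r : ℝ} (hK : 0 ≤ K) (hf : Continuous f)
    (hf0 : ∀ τ, 0 ≤ f τ) (hr : r ∈ Icc T t) :
    exp (-(K * (t - T))) * ∫ τ in T..r, f τ ≤ duhamel K f T t := by
  have hint (a b : ℝ) : IntervalIntegrable (fun τ => exp (K * τ) * f τ) volume a b :=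
    Continuous.intervalIntegrable (by fun_prop) a b
  have hstart : ∫ τ in T..r, exp (K * T) * f τ ≤ ∫ τ in T..r, exp (K * τ) * f τ := by
    refine intervalIntegral.integral_mono_on hr.1
      (Continuous.intervalIntegrable (by fun_prop) _ _) (hint T r) fun τ hτ => ?_
    have hexp : exp (K * T) ≤ exp (K * τ) := by gcongr; exact hτ.1
    exact mul_le_mul_of_nonneg_right hexp (hf0 τ)
  have htail : ∫ τ in T..r, exp (K * τ) * f τ ≤ ∫ τ in T..t, exp (K * τ) * f τ :=
    intervalIntegral.integral_mono_interval le_rfl hr.1 hr.2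
      (ae_of_all _ fun τ => mul_nonneg (exp_pos _).le (hf0 τ)) (hint T t)
  calc exp (-(K * (t - T))) * ∫ τ in T..r, f τ
      = exp (-(K * t)) * ∫ τ in T..r, exp (K * T) * f τ := by
        rw [intervalIntegral.integral_const_mul, ← mul_assoc, ← exp_add]
        ring_nf
    _ ≤ duhamel K f T t := mul_le_mul_of_nonneg_left (hstart.trans htail) (exp_pos _).le

end Duhamel

/-- A subsolution `θ ≤ 1` of `θ_t + M θ θ_x + (-Δ)^s θ - ε₁ θ_xx = ε₀` in the cylinder
`[-5, 5] × [T, 0]`, for a variable coefficient `M`. The integrability of the difference quotients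
guards against the junk value of `fracLap`. -/
structure IsSubsolution (s ε₁ ε₀ : ℝ) (M θ : ℝ → ℝ → ℝ) (T : ℝ) : Prop where
  cont : ContinuousOn (fun p : ℝ × ℝ => θ p.1 p.2) (univ ×ˢ Icc T 0)
  diff_t : ∀ p ∈ Icc (-5 : ℝ) 5 ×ˢ Icc T 0, DifferentiableAt ℝ (fun t => θ p.1 t) p.2
  diff_x : ∀ p ∈ Icc (-5 : ℝ) 5 ×ˢ Icc T 0, DifferentiableAt ℝ (fun x => θ x p.2) p.1
  diff_xx : ∀ p ∈ Icc (-5 : ℝ) 5 ×ˢ Icc T 0, DifferentiableAt ℝ (deriv fun x => θ x p.2) p.1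
  integrable : ∀ p ∈ Icc (-5 : ℝ) 5 ×ˢ Icc T 0,
    Integrable fun y : ℝ => (θ p.1 p.2 - θ y p.2) / |p.1 - y| ^ (1 + 2 * s)
  le_one : ∀ x : ℝ, ∀ t ∈ Icc T 0, θ x t ≤ 1
  ineq : ∀ p ∈ Icc (-5 : ℝ) 5 ×ˢ Icc T 0,
    deriv (fun t => θ p.1 t) p.2 + M p.1 p.2 * θ p.1 p.2 * deriv (fun x => θ x p.2) p.1
      + fracLap s (fun x => θ x p.2) p.1 - ε₁ * deriv (deriv fun x => θ x p.2) p.1 ≤ ε₀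

theorem IsSubsolution.continuous_slice {s ε₁ ε₀ T t : ℝ} {M θ : ℝ → ℝ → ℝ}
    (hθ : IsSubsolution s ε₁ ε₀ M θ T) (ht : t ∈ Icc T 0) : Continuous fun x => θ x t :=
  hθ.cont.comp_continuous (f := fun x => (x, t)) (by fun_prop) fun x => ⟨mem_univ x, ht⟩

theorem exists_touching_of_lt {θ B : ℝ → ℝ → ℝ} {R T T' ε x t : ℝ} (hε : 0 ≤ ε)
    (hθ : ContinuousOn (fun p : ℝ × ℝ => θ p.1 p.2) (Icc (-R) R ×ˢ Icc T T'))
    (hB : ContinuousOn (fun p : ℝ × ℝ => B p.1 p.2) (Icc (-R) R ×ˢ Icc T T'))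
    (hθ_le : ∀ x, ∀ t ∈ Icc T T', θ x t ≤ 1) (hB_start : ∀ x, B x T = 0)
    (hB_far : ∀ x, R ≤ |x| → ∀ t ∈ Icc T T', B x t = 0) (ht : t ∈ Icc T T')
    (hlt : 1 + ε * (t - T) < θ x t + B x t) :
    ∃ x₀, ∃ t₀ ∈ Ioc T T', 1 < θ x₀ t₀ + B x₀ t₀ ∧
      (∀ y, θ y t₀ + B y t₀ ≤ θ x₀ t₀ + B x₀ t₀) ∧
      ∀ τ ∈ Icc T t₀, θ x₀ τ + B x₀ τ - ε * (τ - T) ≤ θ x₀ t₀ + B x₀ t₀ - ε * (t₀ - T) := by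
  have hfar (y : ℝ) (hy : y ∉ Icc (-R) R) (τ : ℝ) (hτ : τ ∈ Icc T T') : θ y τ + B y τ ≤ 1 := by
    have hy' : R ≤ |y| := (lt_of_not_ge (mt abs_le.mp hy)).le
    rw [hB_far y hy' τ hτ, add_zero]
    exact hθ_le y τ hτ
  have hx : x ∈ Icc (-R) R := by
    by_contra hx
    linarith [hfar x hx t ht, mul_nonneg hε (sub_nonneg.mpr ht.1)]
  have hcont : ContinuousOn (fun p : ℝ × ℝ => θ p.1 p.2 + B p.1 p.2 - ε * (p.2 - T))
      (Icc (-R) R ×ˢ Icc T T') := (hθ.add hB).sub (by fun_prop)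
  obtain ⟨⟨x₀, t₀⟩, ⟨hx₀, ht₀⟩, hmax⟩ :=
    (isCompact_Icc.prod isCompact_Icc).exists_isMaxOn ⟨(x, t), hx, ht⟩ hcont
  have hle (y τ : ℝ) (hy : y ∈ Icc (-R) R) (hτ : τ ∈ Icc T T') :
      θ y τ + B y τ - ε * (τ - T) ≤ θ x₀ t₀ + B x₀ t₀ - ε * (t₀ - T) :=
    isMaxOn_iff.mp hmax (y, τ) ⟨hy, hτ⟩
  have hone : 1 < θ x₀ t₀ + B x₀ t₀ - ε * (t₀ - T) := by linarith [hle x t hx ht]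
  have hone' : 1 < θ x₀ t₀ + B x₀ t₀ := by linarith [mul_nonneg hε (sub_nonneg.mpr ht₀.1)]
  have hTt₀ : T ≠ t₀ := by
    rintro rfl
    linarith [hθ_le x₀ T ht₀, hB_start x₀]
  refine ⟨x₀, t₀, ⟨lt_of_le_of_ne ht₀.1 hTt₀, ht₀.2⟩, hone', fun y => ?_,
    fun τ hτ => hle x₀ τ hx₀ ⟨hτ.1, hτ.2.trans ht₀.2⟩⟩
  by_cases hy : y ∈ Icc (-R) R
  · linarith [hle y t₀ hy ht₀]
  · exact (hfar y hy t₀ ht₀).trans hone'.le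

theorem IsSubsolution.le_of_touching {s ε₁ ε₀ T x t ε k wt wxx : ℝ} {M θ w : ℝ → ℝ → ℝ}
    {wx : ℝ → ℝ} (hθ : IsSubsolution s ε₁ ε₀ M θ T) (hs : s ∈ Ioo (0 : ℝ) 1) (hε₁ : 0 ≤ ε₁)
    (hx : |x| < 5) (ht : t ∈ Ioc T 0)
    (hmax_x : ∀ y, θ y t + w y t ≤ θ x t + w x t) (hone : 1 ≤ θ x t + w x t)
    (hmax_t : ∀ τ ∈ Icc T t, θ x τ + w x τ - ε * (τ - T) ≤ θ x t + w x t - ε * (t - T))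
    (hwt : HasDerivAt (fun τ => w x τ) wt t)
    (hwx : ∀ᶠ y in nhds x, HasDerivAt (fun y => w y t) (wx y) y) (hwxx : HasDerivAt wx wxx x)
    (hw_le : ∀ y, w y t ≤ 1 / 4)
    (hw : ∀ h, -(2 * k * min 1 (h ^ 2)) ≤ w (x + h) t + w (x - h) t - 2 * w x t) :
    ε - wt - M x t * θ x t * wx x
      + fracC s * (nonposMass (fun y => θ y t) / 864 - k * ∫ h, levyKernel s h)
      + ε₁ * wxx ≤ ε₀ := by
  have htI : t ∈ Icc T 0 := Ioc_subset_Icc_self ht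
  have hp : (x, t) ∈ Icc (-5 : ℝ) 5 ×ˢ Icc T 0 := ⟨abs_le.mp hx.le, htI⟩
  have htime : 0 ≤ deriv (fun τ => θ x τ) t + wt - ε * 1 :=
    hasDerivAt_nonneg_of_forall_Icc_le ht.1 (((hθ.diff_t _ hp).hasDerivAt.add hwt).sub
      (((hasDerivAt_id t).sub_const T).const_mul ε)) hmax_t
  have hdiff : ∀ᶠ y in nhds x, DifferentiableAt ℝ (fun y => θ y t) y := by
    filter_upwards [continuous_abs.continuousAt.eventually_lt continuousAt_const hx] with y hy
      using hθ.diff_x (y, t) ⟨abs_le.mp hy.le, htI⟩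
  obtain ⟨hspace, hspace₂⟩ := derivs_of_isLocalMax_add (Eventually.of_forall hmax_x)
    hdiff (hθ.diff_xx _ hp) hwx hwxx
  have hlap := le_fracLap_of_touching hs (hθ.continuous_slice htI) (hθ.integrable _ hp) hx.le
    hmax_x hone hw_le hw
  have hineq := hθ.ineq _ hp
  simp only at hineq
  rw [hspace] at hineq
  linarith [mul_le_mul_of_nonneg_left hspace₂ hε₁]

/-- The half-width of the support of `barrier` at time `t ≤ 0`. It shrinks from `5` to `2` on
`[-2/N, 0]`, at a speed exceeding that of a drift bounded by `N`. -/
noncomputable def radius (N t : ℝ) : ℝ := 2 - 3 / 2 * N * t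

theorem radius_mem_Icc {N t : ℝ} (hN : 0 < N) (ht : t ∈ Icc (-(2 / N)) 0) :
    radius N t ∈ Icc 2 5 := by
  have hlower : -2 ≤ N * t :=
    calc -2 = N * -(2 / N) := by field_simp
      _ ≤ N * t := mul_le_mul_of_nonneg_left ht.1 hN.le
  have hupper : N * t ≤ 0 := mul_nonpos_of_nonneg_of_nonpos hN.le ht.2
  constructor <;> unfold radius <;> linarith

/-- A bump of height `m t` carried by `[-radius N t, radius N t]`, used as a lower barrier for
`1 - θ`. -/
noncomputable def barrier (N : ℝ) (m : ℝ → ℝ) (x t : ℝ) : ℝ := m t * cosBump (x / radius N t)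

section Barrier

variable {N x t : ℝ} {m : ℝ → ℝ}

theorem continuousOn_barrier {D : Set (ℝ × ℝ)} (hm : ContinuousOn (fun p : ℝ × ℝ => m p.2) D)
    (hρ : ∀ p ∈ D, radius N p.2 ≠ 0) :
    ContinuousOn (fun p : ℝ × ℝ => barrier N m p.1 p.2) D := by
  refine hm.mul (continuous_cosBump.comp_continuousOn (continuousOn_fst.div ?_ hρ))
  unfold radius
  fun_prop

theorem barrier_le (hm : 0 ≤ m t) : barrier N m x t ≤ m t :=
  mul_le_of_le_one_right hm (cosBump_le_one _)

theorem barrier_of_radius_le_abs (hρ : 0 < radius N t) (hx : radius N t ≤ |x|) :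
    barrier N m x t = 0 := by
  rw [barrier, cosBump_of_one_le_abs, mul_zero]
  rwa [abs_div, abs_of_pos hρ, one_le_div hρ]

theorem half_le_barrier (hm : 0 ≤ m t) (hρ : 2 ≤ radius N t) (hx : |x| ≤ 1) :
    m t / 2 ≤ barrier N m x t := by
  have hz : |x / radius N t| ≤ 2 / 3 := by
    rw [abs_div, abs_of_pos (a := radius N t) (by linarith), div_le_iff₀ (by linarith)]
    linarith
  rw [barrier, div_eq_mul_one_div]
  exact mul_le_mul_of_nonneg_left (half_le_cosBump hz) hm

theorem hasDerivAt_barrier_time {m' : ℝ} (hm : HasDerivAt m m' t) (hρ : radius N t ≠ 0)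
    (hx : |x / radius N t| < 1) :
    HasDerivAt (fun τ => barrier N m x τ) (m' * cosBump (x / radius N t)
      - m t * (π / 2 * sin (π / 2 * (x / radius N t)) / radius N t
        * (3 / 2 * N * (x / radius N t)))) t := by
  have hradius : HasDerivAt (radius N) (-(3 / 2 * N)) t :=
    (((hasDerivAt_id t).const_mul (3 / 2 * N)).const_sub 2).congr_deriv (by ring)
  have hratio : HasDerivAt (fun τ => x / radius N τ)
      (3 / 2 * N * (x / radius N t) / radius N t) t :=
    ((hasDerivAt_const t x).div hradius hρ).congr_deriv (by field_simp; ring)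
  have hbump : HasDerivAt (fun τ => cosBump (x / radius N τ))
      (-(π / 2 * sin (π / 2 * (x / radius N t))) * (3 / 2 * N * (x / radius N t) / radius N t)) t :=
    HasDerivAt.comp (h₂ := cosBump) t (hasDerivAt_cosBump hx) hratio
  exact (hm.mul hbump).congr_deriv (by ring)

theorem barrier_second_difference (hm : 0 ≤ m t) (hρ : 2 ≤ radius N t)
    (hx : |x / radius N t| ≤ 1) (h : ℝ) :
    -(2 * barrier N m x t * min 1 (h ^ 2)) ≤
      barrier N m (x + h) t + barrier N m (x - h) t - 2 * barrier N m x t := by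
  have hscale : (2 * (h / radius N t)) ^ 2 ≤ h ^ 2 := by
    rw [show 2 * (h / radius N t) = 2 / radius N t * h by ring, mul_pow]
    exact mul_le_of_le_one_left (sq_nonneg h)
      (pow_le_one₀ (by positivity) (div_le_one_of_le₀ hρ (by linarith)))
  have hbump := mul_le_mul_of_nonneg_left (cosBump_second_difference hx (h / radius N t)) hm
  have hmin : barrier N m x t * min 1 ((2 * (h / radius N t)) ^ 2) ≤
      barrier N m x t * min 1 (h ^ 2) :=
    mul_le_mul_of_nonneg_left (min_le_min_left 1 hscale) (mul_nonneg hm (cosBump_nonneg _))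
  unfold barrier at hmin ⊢
  rw [add_div, sub_div]
  linarith

end Barrier

theorem neg_barrier_drift_le {N v z ρ : ℝ} (hv : |v| ≤ N) (hz : |z| ≤ 1) (hρ : 2 ≤ ρ) :
    -(π / 2 * sin (π / 2 * z) / ρ * (3 / 2 * N * z + v)) ≤ 2 * N * cosBump z := by
  have hN : 0 ≤ N := (abs_nonneg v).trans hv
  have hfactor : π / 2 / ρ ≤ 1 := div_le_one_of_le₀ (by linarith [pi_le_four]) (by linarith)
  calc -(π / 2 * sin (π / 2 * z) / ρ * (3 / 2 * N * z + v))
      = π / 2 / ρ * -(sin (π / 2 * z) * (3 / 2 * N * z + v)) := by ring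
    _ ≤ π / 2 / ρ * (2 * N * cosBump z) :=
        mul_le_mul_of_nonneg_left (neg_sin_mul_add_le_cosBump hv hz) (by positivity)
    _ ≤ 2 * N * cosBump z :=
        mul_le_of_le_one_left (mul_nonneg (by positivity) (cosBump_nonneg z)) hfactor

theorem IsSubsolution.le_of_touching_barrier {s ε₁ ε₀ ε N γ Λ E x t : ℝ} {M θ : ℝ → ℝ → ℝ}
    {m : ℝ → ℝ} (hθ : IsSubsolution s ε₁ ε₀ M θ (-(2 / N))) (hs : s ∈ Ioo (0 : ℝ) 1)
    (hN : 0 < N) (hM : ∀ p ∈ Icc (-5 : ℝ) 5 ×ˢ Icc (-(2 / N)) 0, |M p.1 p.2| ≤ N)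
    (hε₁ : ε₁ ∈ Icc 0 E) (hγ₀ : 0 ≤ γ) (hγ : 864 * γ ≤ fracC s)
    (hΛ : fracC s * ∫ h, levyKernel s h ≤ Λ) (hm_mem : m t ∈ Icc 0 (1 / 4))
    (hm : HasDerivAt m (γ * nonposMass (fun y => θ y t) - (2 * N + Λ + E) * m t) t)
    (ht : t ∈ Ioc (-(2 / N)) 0) (hone : 1 < θ x t + barrier N m x t)
    (hmax_x : ∀ y, θ y t + barrier N m y t ≤ θ x t + barrier N m x t)
    (hmax_t : ∀ τ ∈ Icc (-(2 / N)) t, θ x τ + barrier N m x τ - ε * (τ - -(2 / N)) ≤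
      θ x t + barrier N m x t - ε * (t - -(2 / N))) : ε ≤ ε₀ := by
  have htI := Ioc_subset_Icc_self ht
  obtain ⟨hρ₂, hρ₅⟩ := radius_mem_Icc hN htI
  have hρ : 0 < radius N t := by linarith
  have hθ_le : θ x t ≤ 1 := hθ.le_one x t htI
  have hw_le (y : ℝ) : barrier N m y t ≤ 1 / 4 := (barrier_le hm_mem.1).trans hm_mem.2
  have hx : |x| < radius N t := by
    by_contra! hle
    linarith [barrier_of_radius_le_abs (m := m) hρ hle]
  have hx₅ : |x| < 5 := hx.trans_le hρ₅
  have hz : |x / radius N t| < 1 := by rwa [abs_div, abs_of_pos hρ, div_lt_one hρ]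
  have hnear : ∀ᶠ y in nhds x, |y / radius N t| < 1 :=
    ContinuousAt.eventually_lt (f := fun y => |y / radius N t|) (by fun_prop) (by fun_prop) hz
  have hmain := hθ.le_of_touching hs hε₁.1 hx₅ ht hmax_x hone.le hmax_t
    (hasDerivAt_barrier_time hm hρ.ne' hz)
    (hnear.mono fun y hy => hasDerivAt_const_mul_cosBump_div hy)
    (hasDerivAt_deriv_const_mul_cosBump_div hz) hw_le
    (barrier_second_difference hm_mem.1 hρ₂ hz.le)
  have hv : |M x t * θ x t| ≤ N := by
    rw [abs_mul]
    exact (mul_le_of_le_one_right (abs_nonneg _)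
      (abs_le.mpr ⟨by linarith [hw_le x], hθ_le⟩)).trans (hM (x, t) ⟨abs_le.mp hx₅.le, htI⟩)
  have hdrift := mul_le_mul_of_nonneg_left (neg_barrier_drift_le hv hz.le hρ₂) hm_mem.1
  set G := nonposMass fun y => θ y t
  set b := cosBump (x / radius N t) with hb
  have hmb : 0 ≤ m t * b := mul_nonneg hm_mem.1 (cosBump_nonneg _)
  have hviscous : ε₁ * ((π / 2 / radius N t) ^ 2 * (m t * b)) ≤ E * (m t * b) :=
    mul_le_mul hε₁.2 (mul_le_of_le_one_left hmb (pow_le_one₀ (by positivity)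
      (div_le_one_of_le₀ (by linarith [pi_le_four]) hρ.le))) (by positivity)
      (hε₁.1.trans hε₁.2)
  have hjump : γ * G - Λ * (m t * b) ≤
      fracC s * (G / 864 - barrier N m x t * ∫ h, levyKernel s h) := by
    rw [barrier, ← hb]
    linarith [mul_le_mul_of_nonneg_right hγ (nonposMass_nonneg fun y => θ y t),
      mul_le_mul_of_nonneg_left hΛ hmb]
  have hgain : γ * G * b ≤ γ * G :=
    mul_le_of_le_one_right (mul_nonneg hγ₀ (nonposMass_nonneg _)) (cosBump_le_one _)
  -- The equation for `m` was chosen so that only `ε - ε₀ + γ * G * (1 - b) ≤ 0` is left.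
  linarith

theorem IsSubsolution.add_barrier_le {s ε₁ ε₀ ε N γ Λ E x t : ℝ} {M θ : ℝ → ℝ → ℝ} {m : ℝ → ℝ}
    (hθ : IsSubsolution s ε₁ ε₀ M θ (-(2 / N))) (hs : s ∈ Ioo (0 : ℝ) 1) (hN : 0 < N)
    (hM : ∀ p ∈ Icc (-5 : ℝ) 5 ×ˢ Icc (-(2 / N)) 0, |M p.1 p.2| ≤ N) (hε₁ : ε₁ ∈ Icc 0 E)
    (hε : 0 ≤ ε) (hε₀ : ε₀ < ε) (hγ₀ : 0 ≤ γ) (hγ : 864 * γ ≤ fracC s)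
    (hΛ : fracC s * ∫ h, levyKernel s h ≤ Λ) (hm_start : m (-(2 / N)) = 0)
    (hm_mem : ∀ t ∈ Icc (-(2 / N)) 0, m t ∈ Icc 0 (1 / 4))
    (hm : ∀ t ∈ Icc (-(2 / N)) 0,
      HasDerivAt m (γ * nonposMass (fun y => θ y t) - (2 * N + Λ + E) * m t) t)
    (ht : t ∈ Icc (-(2 / N)) 0) : θ x t + barrier N m x t ≤ 1 + ε * (t - -(2 / N)) := by
  have hradius (t : ℝ) (ht : t ∈ Icc (-(2 / N)) 0) : 0 < radius N t :=
    two_pos.trans_le (radius_mem_Icc hN ht).1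
  have hm_cont : ContinuousOn m (Icc (-(2 / N)) 0) :=
    fun t ht => (hm t ht).continuousAt.continuousWithinAt
  by_contra! hlt
  obtain ⟨x₀, t₀, ht₀, hone, hmax_x, hmax_t⟩ := exists_touching_of_lt (R := 5) hε
    (hθ.cont.mono (prod_mono_left (subset_univ _)))
    (continuousOn_barrier (hm_cont.comp continuousOn_snd fun p hp => hp.2)
      fun p hp => (hradius p.2 hp.2).ne')
    hθ.le_one (fun x => by rw [barrier, hm_start, zero_mul])
    (fun x hx t ht => barrier_of_radius_le_abs (hradius t ht) ((radius_mem_Icc hN ht).2.trans hx))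
    ht hlt
  have ht₀I := Ioc_subset_Icc_self ht₀
  exact hε₀.not_ge (hθ.le_of_touching_barrier hs hN hM hε₁ hγ₀ hγ hΛ (hm_mem t₀ ht₀I)
    (hm t₀ ht₀I) ht₀ hone hmax_x hmax_t)

theorem IsSubsolution.exists_continuous_eqOn_nonposMass {s ε₁ ε₀ T : ℝ} {M θ : ℝ → ℝ → ℝ}
    (hθ : IsSubsolution s ε₁ ε₀ M θ T) (hT : T ≤ 0) :
    ∃ g : ℝ → ℝ, Continuous g ∧ (∀ t, g t ∈ Icc 0 2) ∧
      EqOn g (fun t => nonposMass fun y => θ y t) (Icc T 0) := by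
  refine ⟨IccExtend hT ((Icc T 0).domRestrict fun t => nonposMass fun y => θ y t),
    (continuousOn_nonposMass hθ.cont).domRestrict.Icc_extend', fun t =>
    ⟨nonposMass_nonneg _, nonposMass_le_two (hθ.continuous_slice (projIcc T 0 hT t).2)⟩,
    fun t ht => IccExtend_of_mem hT _ ht⟩

theorem IsSubsolution.exists_amplitude {s ε₁ ε₀ N γ K μ : ℝ} {M θ : ℝ → ℝ → ℝ}
    (hθ : IsSubsolution s ε₁ ε₀ M θ (-(2 / N))) (hN : 0 < N) (hγ₀ : 0 ≤ γ) (hγN : 16 * γ ≤ N)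
    (hK : 0 ≤ K) (hμ : μ ≤ volume.real {p : ℝ × ℝ |
      p ∈ Icc (-1 : ℝ) 1 ×ˢ Icc (-(2 / N)) (-(1 / N)) ∧ θ p.1 p.2 ≤ 0}) :
    ∃ m : ℝ → ℝ, m (-(2 / N)) = 0 ∧ (∀ t ∈ Icc (-(2 / N)) 0, m t ∈ Icc 0 (1 / 4)) ∧
      (∀ t ∈ Icc (-(2 / N)) 0,
        HasDerivAt m (γ * nonposMass (fun y => θ y t) - K * m t) t) ∧
      ∀ t ∈ Icc (-(1 / N)) 0, exp (-(K * (2 / N))) * (γ * μ) ≤ m t := by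
  set T := -(2 / N)
  have hT₁ : T ≤ -(1 / N) := neg_le_neg (by gcongr; norm_num)
  have h₁0 : -(1 / N) ≤ 0 := by simpa using hN.le
  obtain ⟨g, hg, hg_mem, hg_eq⟩ := hθ.exists_continuous_eqOn_nonposMass (hT₁.trans h₁0)
  have hf : Continuous fun t => γ * g t := by fun_prop
  have hf₀ (t : ℝ) : 0 ≤ γ * g t := mul_nonneg hγ₀ (hg_mem t).1
  refine ⟨duhamel K (fun t => γ * g t) T, duhamel_self, fun t ht =>
    ⟨duhamel_nonneg hf₀ ht.1, ?_⟩, fun t ht => ?_, fun t ht => ?_⟩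
  · calc duhamel K (fun t => γ * g t) T t ≤ γ * 2 * (t - T) :=
          duhamel_le hK (by positivity) hf
            (fun τ => mul_le_mul_of_nonneg_left (hg_mem τ).2 hγ₀) ht.1
      _ ≤ γ * 2 * (2 / N) := by gcongr; linarith [ht.2]
      _ = 4 * γ / N := by ring
      _ ≤ 1 / 4 := by rw [div_le_iff₀ hN]; linarith
  · rw [← show g t = nonposMass fun y => θ y t from hg_eq ht]
    exact hasDerivAt_duhamel hf
  · have hmass : γ * μ ≤ ∫ τ in T..-(1 / N), γ * g τ :=
      calc γ * μ ≤ γ * ∫ τ in T..-(1 / N), nonposMass fun y => θ y τ := by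
            refine mul_le_mul_of_nonneg_left (hμ.trans ?_) hγ₀
            exact volume_nonpos_le_integral_nonposMass hT₁ (hθ.cont.mono
              (prod_mono (subset_univ _) (Icc_subset_Icc_right h₁0)))
        _ = ∫ τ in T..-(1 / N), γ * g τ := by
            rw [intervalIntegral.integral_const_mul]
            refine congrArg (γ * ·) (intervalIntegral.integral_congr fun τ hτ => ?_)
            rw [uIcc_of_le hT₁] at hτ
            exact (hg_eq ⟨hτ.1, hτ.2.trans h₁0⟩).symm
    calc exp (-(K * (2 / N))) * (γ * μ)
        ≤ exp (-(K * (2 / N))) * ∫ τ in T..-(1 / N), γ * g τ := by gcongr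
      _ ≤ exp (-(K * (t - T))) * ∫ τ in T..-(1 / N), γ * g τ := by
          refine mul_le_mul_of_nonneg_right ?_
            (intervalIntegral.integral_nonneg hT₁ fun τ _ => hf₀ τ)
          gcongr
          linarith [ht.2]
      _ ≤ duhamel K (fun t => γ * g t) T t :=
          exp_mul_integral_le_duhamel hK hf hf₀ ⟨hT₁, ht.1⟩

theorem IsSubsolution.le_one_sub {s ε₁ ε₀ κ N γ Λ E μ x t : ℝ} {M θ : ℝ → ℝ → ℝ}
    (hθ : IsSubsolution s ε₁ ε₀ M θ (-(2 / N))) (hs : s ∈ Ioo (0 : ℝ) 1) (hN : 0 < N)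
    (hM : ∀ p ∈ Icc (-5 : ℝ) 5 ×ˢ Icc (-(2 / N)) 0, |M p.1 p.2| ≤ N) (hε₁ : ε₁ ∈ Icc 0 E)
    (hγ₀ : 0 ≤ γ) (hγN : 16 * γ ≤ N) (hγ : 864 * γ ≤ fracC s) (hΛ₀ : 0 ≤ Λ)
    (hΛ : fracC s * ∫ h, levyKernel s h ≤ Λ)
    (hμ : μ ≤ volume.real {p : ℝ × ℝ |
      p ∈ Icc (-1 : ℝ) 1 ×ˢ Icc (-(2 / N)) (-(1 / N)) ∧ θ p.1 p.2 ≤ 0})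
    (hκ : κ = exp (-((2 * N + Λ + E) * (2 / N))) * (γ * μ)) (hκ₀ : 0 ≤ κ)
    (hε₀ : ε₀ < κ * N / 8) (hx : |x| ≤ 1) (ht : t ∈ Icc (-(1 / N)) 0) :
    θ x t ≤ 1 - κ / 4 := by
  have hE : 0 ≤ E := hε₁.1.trans hε₁.2
  have htI : t ∈ Icc (-(2 / N)) 0 :=
    ⟨(neg_le_neg (by gcongr; norm_num)).trans ht.1, ht.2⟩
  obtain ⟨m, hm_start, hm_mem, hm, hκm⟩ :=
    hθ.exists_amplitude hN hγ₀ hγN (show 0 ≤ 2 * N + Λ + E by positivity) hμ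
  calc θ x t ≤ 1 + κ * N / 8 * (t - -(2 / N)) - barrier N m x t :=
        le_sub_iff_add_le.mpr (hθ.add_barrier_le hs hN hM hε₁ (by positivity) hε₀ hγ₀ hγ hΛ
          hm_start hm_mem hm htI)
    _ ≤ 1 + κ * N / 8 * (2 / N) - κ / 2 := by
        gcongr
        · linarith [ht.2]
        · exact (div_le_div_of_nonneg_right (hκ ▸ hκm t ht) two_pos.le).trans
            (half_le_barrier (hm_mem t htI).1 (radius_mem_Icc hN htI).1 hx)
    _ = 1 - κ / 4 := by field_simp; ring

theorem measure_to_point_estimate_general {s₀ s₁ N E μ : ℝ} (hs₀ : 0 < s₀) (hs₁ : s₁ < 1)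
    (hN : 0 < N) (hμ : 0 < μ) :
    ∃ ε₀ lam : ℝ, 0 < ε₀ ∧ 0 < lam ∧
      ∀ s ∈ Icc s₀ s₁, ∀ ε₁ ∈ Icc 0 E, ∀ M θ : ℝ → ℝ → ℝ,
        (∀ p ∈ Icc (-5 : ℝ) 5 ×ˢ Icc (-(2 / N)) 0, |M p.1 p.2| ≤ N) →
        IsSubsolution s ε₁ ε₀ M θ (-(2 / N)) →
        ENNReal.ofReal μ ≤ volume {p : ℝ × ℝ |
          p ∈ Icc (-1 : ℝ) 1 ×ˢ Icc (-(2 / N)) (-(1 / N)) ∧ θ p.1 p.2 ≤ 0} →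
        ∀ x ∈ Icc (-1 : ℝ) 1, ∀ t ∈ Icc (-(1 / N)) 0, θ x t ≤ 1 - lam := by
  obtain ⟨c, Λ, hc, hΛ₀, hbounds⟩ := exists_fracC_bounds hs₀ hs₁
  set γ := min (c / 864) (N / 16)
  have hγ₀ : 0 < γ := by positivity
  have hγc : γ ≤ c / 864 := min_le_left _ _
  have hγN : γ ≤ N / 16 := min_le_right _ _
  set κ := exp (-((2 * N + Λ + E) * (2 / N))) * (γ * μ) with hκ
  have hκ₀ : 0 < κ := by positivity
  refine ⟨κ * N / 16, κ / 4, by positivity, by positivity,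
    fun s hs ε₁ hε₁ M θ hM hθ hvol x hx t ht => ?_⟩
  have hfinite : volume {p : ℝ × ℝ |
      p ∈ Icc (-1 : ℝ) 1 ×ˢ Icc (-(2 / N)) (-(1 / N)) ∧ θ p.1 p.2 ≤ 0} ≠ ⊤ :=
    measure_ne_top_of_subset (fun p hp => hp.1)
      (isCompact_Icc.prod isCompact_Icc).measure_lt_top.ne
  obtain ⟨hcs, hΛ⟩ := hbounds s hs
  exact hθ.le_one_sub ⟨hs₀.trans_le hs.1, hs.2.trans_lt hs₁⟩ hN hM hε₁ hγ₀.le (by linarith)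
    (by linarith) hΛ₀ hΛ ((ENNReal.ofReal_le_iff_le_toReal hfinite).mp hvol) hκ hκ₀.le
    (by linarith [mul_pos hκ₀ hN]) (abs_le.mpr hx) ht

/-- the measure-to-pointwise-estimate lemma. If a subsolution is `≤ 1`
everywhere and nonpositive on a set of measure at least `μ` inside
`[-1,1] × [-2/M₀, -1/M₀]`, then it is `≤ 1 - lam` on `[-1,1] × [-1/M₀, 0]`. -/
theorem measure_to_point_estimate (M₀ μ : ℝ) (hM₀ : 2 ≤ M₀) (hμ : 0 < μ) :
    ∃ ε₀ lam : ℝ, 0 < ε₀ ∧ 0 < lam ∧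
      ∀ s M ε₁ : ℝ, s ∈ Set.Icc (1 / 4 : ℝ) (1 / 2) → |M| ≤ M₀ →
        0 < ε₁ → ε₁ ≤ (10 : ℝ) ^ ((3 : ℝ) / 2) →
        ∀ θ : ℝ → ℝ → ℝ,
        -- bounded and continuous on ℝ × [-2/M₀, 0]
        (∃ B : ℝ, ∀ x : ℝ, ∀ t ∈ Set.Icc (-(2 / M₀)) 0, |θ x t| ≤ B) →
        ContinuousOn (fun p : ℝ × ℝ => θ p.1 p.2)
          (Set.univ ×ˢ Set.Icc (-(2 / M₀)) 0) →
        -- continuously differentiable in t and twice continuously differentiable in x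
        -- on [-5,5] × [-2/M₀, 0]
        (∀ p ∈ Set.Icc (-5 : ℝ) 5 ×ˢ Set.Icc (-(2 / M₀)) 0,
          DifferentiableAt ℝ (fun t => θ p.1 t) p.2) →
        ContinuousOn (fun p : ℝ × ℝ => deriv (fun t => θ p.1 t) p.2)
          (Set.Icc (-5 : ℝ) 5 ×ˢ Set.Icc (-(2 / M₀)) 0) →
        (∀ p ∈ Set.Icc (-5 : ℝ) 5 ×ˢ Set.Icc (-(2 / M₀)) 0,
          DifferentiableAt ℝ (fun x => θ x p.2) p.1) →
        (∀ p ∈ Set.Icc (-5 : ℝ) 5 ×ˢ Set.Icc (-(2 / M₀)) 0,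
          DifferentiableAt ℝ (deriv fun x => θ x p.2) p.1) →
        ContinuousOn (fun p : ℝ × ℝ => deriv (fun x => θ x p.2) p.1)
          (Set.Icc (-5 : ℝ) 5 ×ˢ Set.Icc (-(2 / M₀)) 0) →
        ContinuousOn (fun p : ℝ × ℝ => deriv (deriv fun x => θ x p.2) p.1)
          (Set.Icc (-5 : ℝ) 5 ×ˢ Set.Icc (-(2 / M₀)) 0) →
        -- the fractional Laplacian is given by an absolutely convergent integral
        (∀ p ∈ Set.Icc (-5 : ℝ) 5 ×ˢ Set.Icc (-(2 / M₀)) 0,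
          Integrable fun y : ℝ => (θ p.1 p.2 - θ y p.2) / |p.1 - y| ^ (1 + 2 * s)) →
        -- θ ≤ 1 on ℝ × [-2/M₀, 0]
        (∀ x : ℝ, ∀ t ∈ Set.Icc (-(2 / M₀)) 0, θ x t ≤ 1) →
        -- the subsolution inequality on [-5,5] × [-2/M₀, 0]
        (∀ p ∈ Set.Icc (-5 : ℝ) 5 ×ˢ Set.Icc (-(2 / M₀)) 0,
          deriv (fun t => θ p.1 t) p.2
            + M * θ p.1 p.2 * deriv (fun x => θ x p.2) p.1
            + fracLap s (fun x => θ x p.2) p.1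
            - ε₁ * deriv (deriv fun x => θ x p.2) p.1 ≤ ε₀) →
        -- measure assumption
        ENNReal.ofReal μ ≤
          volume {p : ℝ × ℝ |
            p ∈ Set.Icc (-1 : ℝ) 1 ×ˢ Set.Icc (-(2 / M₀)) (-(1 / M₀)) ∧
            θ p.1 p.2 ≤ 0} →
        ∀ x ∈ Set.Icc (-1 : ℝ) 1, ∀ t ∈ Set.Icc (-(1 / M₀)) 0,
          θ x t ≤ 1 - lam := by
  obtain ⟨ε₀, lam, hε₀, hlam, hmain⟩ := measure_to_point_estimate_general
    (show (0 : ℝ) < 1 / 4 by norm_num) (show (1 / 2 : ℝ) < 1 by norm_num)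
    (two_pos.trans_le hM₀) hμ (E := 10 ^ ((3 : ℝ) / 2))
  exact ⟨ε₀, lam, hε₀, hlam, fun s M ε₁ hs hM hε₁ hε₁_le θ _ hcont hdiff_t _ hdiff_x hdiff_xx _ _
    hquot hle hineq hvol => hmain s hs ε₁ ⟨hε₁.le, hε₁_le⟩ (fun _ _ => M) θ (fun _ _ => hM)
      ⟨hcont, hdiff_t, hdiff_x, hdiff_xx, hquot, hle, hineq⟩ hvol⟩
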